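/- Let R be a commutative Noetherian ring and let S be a Serre subcategory of the category of finitely generated R-modules. Then S satisfies condition C_I within the category of finitely generated modules for every ideal I of R: if M is a finitely generated R-module with M = Γ_I(M) and (0 :_M I) ∈ S, then M ∈ S. -/

import Mathlib

universe u

/-- A Serre subcategory of the category of `R`-modules: a class of `R`-modules, closed under
isomorphisms, submodules, quotient modules, and extensions.  A Serre subcategory of the
category of finitely generated `R`-modules is such a class consisting of finitely generated
modules. -/
structure SerreClass (R : Type u) [CommRing R] : Type (u + 1) where
  /-- membership predicate of the class -/
  Mem : ∀ (M : Type u) [AddCommGroup M] [Module R M], Prop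
  mem_of_iso : ∀ (M N : Type u) [AddCommGroup M] [Module R M] [AddCommGroup N] [Module R N],
    (M ≃ₗ[R] N) → Mem M → Mem N
  mem_of_submodule : ∀ (M : Type u) [AddCommGroup M] [Module R M] (N : Submodule R M),
    Mem M → Mem N
  mem_of_quotient : ∀ (M : Type u) [AddCommGroup M] [Module R M] (N : Submodule R M),
    Mem M → Mem (M ⧸ N)
  mem_of_extension : ∀ (M : Type u) [AddCommGroup M] [Module R M] (N : Submodule R M),
    Mem N → Mem (M ⧸ N) → Mem M

/-!
Choose generators `a₁, …, aₜ` of `I`. The map `M → (I M)ᵗ`, `x ↦ (a₁ x, …, aₜ x)`, has kernel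
`(0 :_M I)`, so `M` lies in `S` as soon as `(0 :_M I)` and `I M` do. If `Iⁿ⁺¹ M = 0`, then
`Iⁿ (I M) = 0` and `(0 :_{I M} I) ⊆ (0 :_M I)`, so `I M` lies in `S` by induction on `n`. A
finitely generated `I`-torsion module is killed by some `Iⁿ`, since `M` is the union of the
ascending chain of submodules `(0 :_M Iⁿ)`.
-/

namespace SerreClass

variable {R : Type u} [CommRing R] (S : SerreClass R)
variable {A B : Type u} [AddCommGroup A] [Module R A] [AddCommGroup B] [Module R B]

theorem mem_of_injective (f : A →ₗ[R] B) (hf : Function.Injective f) (hB : S.Mem B) : S.Mem A :=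
  S.mem_of_iso _ _ (LinearEquiv.ofInjective f hf).symm (S.mem_of_submodule B f.range hB)

theorem mem_of_ker (f : A →ₗ[R] B) (hker : S.Mem f.ker) (hB : S.Mem B) : S.Mem A :=
  S.mem_of_extension A f.ker hker <|
    S.mem_of_iso _ _ f.quotKerEquivRange.symm (S.mem_of_submodule B f.range hB)

theorem mem_prod (hA : S.Mem A) (hB : S.Mem B) : S.Mem (A × B) := by
  refine S.mem_of_ker (LinearMap.snd R A B) ?_ hB
  rw [LinearMap.ker_snd]
  exact S.mem_of_iso _ _ (LinearEquiv.ofInjective _ LinearMap.inl_injective) hA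

theorem mem_fin_pi (hA : S.Mem A) : ∀ t : ℕ, S.Mem (Fin t → A)
  | 0 => S.mem_of_injective 0 (Function.injective_of_subsingleton _) hA
  | t + 1 => S.mem_of_iso _ _ (Fin.consLinearEquiv R fun _ : Fin (t + 1) => A)
      (S.mem_prod hA (mem_fin_pi hA t))

variable {I : Ideal R} {M : Type u} [AddCommGroup M] [Module R M]

theorem mem_of_torsionBySet_of_smul_top (hI : I.FG)
    (htors : S.Mem (Submodule.torsionBySet R M (I : Set R)))
    (hIM : S.Mem (I • ⊤ : Submodule R M)) : S.Mem M := by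
  obtain ⟨t, a, span_a : Ideal.span (Set.range a) = I⟩ :=
    Submodule.fg_iff_exists_fin_generating_family.1 hI
  have smul_mem (i : Fin t) (x : M) : a i • x ∈ (I • ⊤ : Submodule R M) :=
    Submodule.smul_mem_smul (span_a ▸ Ideal.subset_span ⟨i, rfl⟩) Submodule.mem_top
  let f : M →ₗ[R] Fin t → (I • ⊤ : Submodule R M) :=
    LinearMap.pi fun i => (LinearMap.lsmul R M (a i)).codRestrict _ (smul_mem i)
  have torsion_I : Submodule.torsionBySet R M (I : Set R) =
      Submodule.torsionBySet R M (Set.range a) := by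
    rw [Submodule.torsionBySet_eq_torsionBySet_span (Set.range a), span_a]
  have ker_f : f.ker = Submodule.torsionBySet R M (I : Set R) := by
    ext x
    simp only [torsion_I, f, LinearMap.ker_pi, Submodule.mem_iInf, LinearMap.mem_ker,
      Submodule.mem_torsionBySet_iff, Set.forall_subtype_range_iff]
    exact forall_congr' fun i => Subtype.ext_iff
  exact S.mem_of_ker f (ker_f ▸ htors) (S.mem_fin_pi hIM t)

theorem mem_torsionBySet_submodule {s : Set R} (N : Submodule R M)
    (h : S.Mem (Submodule.torsionBySet R M s)) : S.Mem (Submodule.torsionBySet R N s) := by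
  have maps_torsion : ∀ x ∈ Submodule.torsionBySet R N s,
      N.subtype x ∈ Submodule.torsionBySet R M s := by
    intro x hx
    rw [Submodule.mem_torsionBySet_iff] at hx ⊢
    exact fun a => congrArg N.subtype (hx a)
  refine S.mem_of_injective (N.subtype.restrict maps_torsion) (fun x y hxy => ?_) h
  have hval : N.subtype x = N.subtype y := congrArg (Submodule.torsionBySet R M s).subtype hxy
  exact Subtype.ext (N.injective_subtype hval)

theorem mem_of_pow_le_annihilator (hI : I.FG) (n : ℕ) (hn : I ^ n ≤ Module.annihilator R M)
    (htors : S.Mem (Submodule.torsionBySet R M (I : Set R))) : S.Mem M := by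
  induction n generalizing M with
  | zero =>
    rw [pow_zero, Ideal.one_eq_top, top_le_iff, Module.annihilator_eq_top_iff] at hn
    exact S.mem_of_injective 0 (Function.injective_of_subsingleton _) htors
  | succ n ih =>
    refine S.mem_of_torsionBySet_of_smul_top hI htors (ih ?_ (S.mem_torsionBySet_submodule _ htors))
    rw [← Submodule.annihilator_top, Submodule.le_annihilator_iff, pow_succ,
      Submodule.mul_smul] at hn
    exact Submodule.le_annihilator_iff.2 hn

end SerreClass

theorem exists_pow_le_annihilator {R M : Type*} [CommSemiring R] [AddCommMonoid M] [Module R M]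
    [Module.Finite R M] (I : Ideal R) (hM : ∀ x : M, ∃ n : ℕ, ∀ a ∈ I ^ n, a • x = 0) :
    ∃ n : ℕ, I ^ n ≤ Module.annihilator R M := by
  let torsionPow : ℕ →o Submodule R M :=
    ⟨fun n => Submodule.torsionBySet R M (I ^ n : Ideal R),
      fun _ _ hmn => Submodule.torsionBySet_le_torsionBySet_of_subset (Ideal.pow_le_pow_right hmn)⟩
  have iSup_torsionPow : iSup torsionPow = ⊤ := by
    refine eq_top_iff.2 fun x _ => ?_
    obtain ⟨n, hn⟩ := hM x
    exact le_iSup torsionPow n ((Submodule.mem_torsionBySet_iff _ _).2 fun a => hn a a.2)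
  obtain ⟨n, hn⟩ := Module.Finite.fg_top.stabilizes_of_iSup_eq torsionPow iSup_torsionPow
  refine ⟨n, fun a ha => Module.mem_annihilator.2 fun x => ?_⟩
  have hx : x ∈ torsionPow n := hn ▸ Submodule.mem_top
  exact (Submodule.mem_torsionBySet_iff _ _).1 hx ⟨a, ha⟩

theorem serreClass_fg_satisfiesC_general {R : Type u} [CommRing R] (S : SerreClass R)
    {I : Ideal R} (hI : I.FG) (M : Type u) [AddCommGroup M] [Module R M] [Module.Finite R M]
    (hM : ∀ x : M, ∃ n : ℕ, ∀ a ∈ I ^ n, a • x = 0)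
    (h0 : S.Mem (Submodule.torsionBySet R M (I : Set R))) : S.Mem M := by
  obtain ⟨n, hn⟩ := exists_pow_le_annihilator I hM
  exact S.mem_of_pow_le_annihilator hI n hn h0

/-- Let `R` be a commutative Noetherian ring and `S` a Serre subcategory of the category of
finitely generated `R`-modules (that is, a Serre subcategory all of whose members are
finitely generated).  Then `S` satisfies the condition `C_I` within finitely generated
modules for every ideal `I` of `R`: if `M` is finitely generated, `M = Γ_I(M)` and
`(0 :_M I) ∈ S`, then `M ∈ S`. -/
theorem serreClass_fg_satisfiesC
    (R : Type u) [CommRing R] [IsNoetherianRing R] (S : SerreClass R)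
    (hfg : ∀ (M : Type u) [AddCommGroup M] [Module R M], S.Mem M → Module.Finite R M)
    (I : Ideal R) (M : Type u) [AddCommGroup M] [Module R M] [Module.Finite R M]
    (hM : ∀ x : M, ∃ n : ℕ, ∀ a ∈ I ^ n, a • x = 0)
    (h0 : S.Mem ↥(Submodule.torsionBySet R M (I : Set R))) :
    S.Mem M :=
  serreClass_fg_satisfiesC_general S (IsNoetherian.noetherian I) M hM h0
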